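/- arXiv:1908.01663 — 2 statements merged into one kernel-verified Lean document; each statement's English description precedes it below -/
import Mathlib

section
/- Let ω₀ > 0, let f : ℝ → ℂ be measurable with f(s) = 0 for s < 0 and sup_{s∈ℝ} (1 + |s|)^p |f(s)| < ∞ for some p ∈ ℝ, and set F(s) = e^{−iω₀ s} f(s). Then for every ω ∈ ℂ with Im ω > 0, every ρ > 0 and every φ ∈ [0, 2π] \ {φ₊, φ₋}, the double integral ∫_0^∞ ∫_ℝ |e^{iωt} 𝒵(β, φ) F(t − ρ cosh β)| dβ dt is finite and ∫_0^∞ e^{iωt} ( (i/(8π)) ∫_ℝ 𝒵(β, φ) F(t − ρ cosh β) dβ ) dt = (i/(8π)) f̂(ω − ω₀) ∫_ℝ 𝒵(β, φ) e^{iωρ cosh β} dβ, where f̂(ω − ω₀) = ∫_0^∞ e^{i(ω − ω₀)s} f(s) ds. -/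
/-!
Put `h s = e^{iωs} F(s) = e^{i(ω - ω₀)s} f(s)` and `K β = 𝒵(β, φ) e^{iωρ cosh β}`. Then

  `e^{iωt} 𝒵(β, φ) F(t - ρ cosh β) = K β * h (t - ρ cosh β)`,

so the claim is Fubini's theorem for a sheared product of two integrable functions. Since
`ρ cosh β > 0` and `h` vanishes on the negative half-line, restricting `t` to `(0, ∞)` loses
nothing, and by translation invariance the inner `t`-integral is `K β * ∫ h`.

* `h` is integrable (`integrable_exp_mul`): polynomial growth against `e^{-(Im ω)s}`.
* `K` is integrable (`integrable_Zker_mul_exp`): on each horizontal line with imaginary part `y`,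
  `|coth| ≤ 1 / |sin y|` (`norm_ccoth_le`), and the condition `φ ≠ π ± α` keeps all four lines
  entering `𝒵` off the poles, so `𝒵(·, φ)` is bounded. The factor `e^{iωρ cosh β}` is dominated by
  a Gaussian, so boundedness of `𝒵(·, φ)` suffices.
-/

open Real MeasureTheory Set Filter

/-- Complex hyperbolic cotangent. -/
noncomputable def ccoth (z : ℂ) : ℂ := Complex.cosh z / Complex.sinh z

/-- The function `U` from the Sommerfeld kernel construction. -/
noncomputable def Ufun (α : ℝ) (ζ : ℂ) : ℂ :=
  ccoth ((1/4 : ℂ) * (ζ - Complex.I * (π/2 : ℝ) + Complex.I * (α : ℝ))) -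
  ccoth ((1/4 : ℂ) * (ζ - Complex.I * (π/2 : ℝ) - Complex.I * (α : ℝ)))

/-- The function `Z`. -/
noncomputable def Zfun (α : ℝ) (z : ℂ) : ℂ :=
  -Ufun α (z - Complex.I * (π/2 : ℝ)) + Ufun α (z - Complex.I * (5*π/2 : ℝ))

/-- The Sommerfeld-type kernel `𝒵(β, φ) = Z(β + 2πi − iφ)`. -/
noncomputable def Zker (α : ℝ) (β φ : ℝ) : ℂ :=
  Zfun α ((β : ℂ) + 2*(π : ℝ)*Complex.I - Complex.I * (φ : ℝ))


/-- On a horizontal line avoiding the poles of `coth`, the function `coth` is bounded. This follows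
from `|cosh z|² ≤ cosh² x` and `|sinh z|² = sinh² x + sin² y ≥ cosh² x sin² y`. -/
lemma norm_ccoth_le (x y : ℝ) (hy : Real.sin y ≠ 0) :
    ‖ccoth ((x : ℂ) + (y : ℂ) * Complex.I)‖ ≤ 1 / |Real.sin y| := by
  have hs : Complex.sinh ((x : ℂ) + (y : ℂ) * Complex.I)
      = ((Real.sinh x * Real.cos y : ℝ) : ℂ) + ((Real.cosh x * Real.sin y : ℝ) : ℂ) * Complex.I := by
    rw [Complex.sinh_add, Complex.sinh_mul_I, Complex.cosh_mul_I]
    push_cast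
    ring
  have hc : Complex.cosh ((x : ℂ) + (y : ℂ) * Complex.I)
      = ((Real.cosh x * Real.cos y : ℝ) : ℂ) + ((Real.sinh x * Real.sin y : ℝ) : ℂ) * Complex.I := by
    rw [Complex.cosh_add, Complex.sinh_mul_I, Complex.cosh_mul_I]
    push_cast
    ring
  have hs2 : ‖Complex.sinh ((x : ℂ) + (y : ℂ) * Complex.I)‖ ^ 2
      = (Real.sinh x * Real.cos y) ^ 2 + (Real.cosh x * Real.sin y) ^ 2 := by
    rw [hs, ← Complex.normSq_eq_norm_sq, Complex.normSq_add_mul_I]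
  have hc2 : ‖Complex.cosh ((x : ℂ) + (y : ℂ) * Complex.I)‖ ^ 2
      = (Real.cosh x * Real.cos y) ^ 2 + (Real.sinh x * Real.sin y) ^ 2 := by
    rw [hc, ← Complex.normSq_eq_norm_sq, Complex.normSq_add_mul_I]
  have hsy : 0 < |Real.sin y| := abs_pos.mpr hy
  have hch : Real.cosh x ^ 2 = Real.sinh x ^ 2 + 1 := Real.cosh_sq x
  have htr : Real.sin y ^ 2 + Real.cos y ^ 2 = 1 := Real.sin_sq_add_cos_sq y
  have key : ‖Complex.cosh ((x : ℂ) + (y : ℂ) * Complex.I)‖ * |Real.sin y|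
      ≤ ‖Complex.sinh ((x : ℂ) + (y : ℂ) * Complex.I)‖ := by
    refine le_of_sq_le_sq ?_ (norm_nonneg _)
    rw [mul_pow, hs2, hc2, sq_abs]
    have e1 : (Real.cosh x * Real.cos y) ^ 2 + (Real.sinh x * Real.sin y) ^ 2
        ≤ Real.cosh x ^ 2 := by
      nlinarith [sq_nonneg (Real.sin y)]
    nlinarith [mul_le_mul_of_nonneg_right e1 (sq_nonneg (Real.sin y)),
      sq_nonneg (Real.sinh x * Real.cos y)]
  have hpos : 0 < ‖Complex.sinh ((x : ℂ) + (y : ℂ) * Complex.I)‖ := by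
    refine lt_of_le_of_ne (norm_nonneg _) fun h0 => ?_
    rw [← h0] at hs2
    have h3 : 0 < (Real.cosh x * Real.sin y) ^ 2 := by
      have := mul_ne_zero (Real.cosh_pos x).ne' hy
      positivity
    nlinarith [sq_nonneg (Real.sinh x * Real.cos y)]
  rw [ccoth, norm_div, div_le_div_iff₀ hpos hsy]
  linarith

/-- The kernel as a combination of four values of `coth` on horizontal lines. -/
lemma Zker_eq (α β φ : ℝ) :
    Zker α β φ =
      -(ccoth (((β / 4 : ℝ) : ℂ) + (((π - φ + α) / 4 : ℝ) : ℂ) * Complex.I)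
        - ccoth (((β / 4 : ℝ) : ℂ) + (((π - φ - α) / 4 : ℝ) : ℂ) * Complex.I))
      + (ccoth (((β / 4 : ℝ) : ℂ) + (((-π - φ + α) / 4 : ℝ) : ℂ) * Complex.I)
        - ccoth (((β / 4 : ℝ) : ℂ) + (((-π - φ - α) / 4 : ℝ) : ℂ) * Complex.I)) := by
  unfold Zker Zfun Ufun
  congr 3 <;> (try congr 1) <;> push_cast <;> ring

lemma sin_ne_zero_of_abs_lt {y : ℝ} (h0 : y ≠ 0) (h1 : -π < y) (h2 : y < π) :
    Real.sin y ≠ 0 := by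
  rwa [Ne, Real.sin_eq_zero_iff_of_lt_of_lt h1 h2]

lemma Zker_bounded {α φ : ℝ} (hα : α ∈ Set.Ioo (π/2) π) (hφ : φ ∈ Set.Icc (0:ℝ) (2*π))
    (hφp : φ ≠ π + α) (hφm : φ ≠ π - α) : ∃ B : ℝ, ∀ β : ℝ, ‖Zker α β φ‖ ≤ B := by
  obtain ⟨hα1, hα2⟩ := hα
  obtain ⟨hφ1, hφ2⟩ := hφ
  have hπ := Real.pi_pos
  have h1 : Real.sin ((π - φ + α) / 4) ≠ 0 :=
    sin_ne_zero_of_abs_lt (fun h => hφp (by linarith)) (by linarith) (by linarith)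
  have h2 : Real.sin ((π - φ - α) / 4) ≠ 0 :=
    sin_ne_zero_of_abs_lt (fun h => hφm (by linarith)) (by linarith) (by linarith)
  have h3 : Real.sin ((-π - φ + α) / 4) ≠ 0 :=
    sin_ne_zero_of_abs_lt (fun h => by linarith) (by linarith) (by linarith)
  -- Here `φ + π + α < 4π`, because `α < π`: the next pole `φ = 3π - α` lies beyond `2π`.
  have h4 : Real.sin ((-π - φ - α) / 4) ≠ 0 :=
    sin_ne_zero_of_abs_lt (fun h => by linarith) (by linarith) (by linarith)
  refine ⟨(1 / |Real.sin ((π - φ + α) / 4)| + 1 / |Real.sin ((π - φ - α) / 4)|)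
    + (1 / |Real.sin ((-π - φ + α) / 4)| + 1 / |Real.sin ((-π - φ - α) / 4)|), fun β => ?_⟩
  rw [Zker_eq]
  refine (norm_add_le _ _).trans (add_le_add ?_ ?_)
  · rw [norm_neg]
    exact (norm_sub_le _ _).trans (add_le_add (norm_ccoth_le _ _ h1) (norm_ccoth_le _ _ h2))
  · exact (norm_sub_le _ _).trans (add_le_add (norm_ccoth_le _ _ h3) (norm_ccoth_le _ _ h4))

lemma measurable_Zker (α φ : ℝ) : Measurable fun β : ℝ => Zker α β φ := by
  unfold Zker Zfun Ufun ccoth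
  fun_prop

lemma sq_div_two_le_cosh (x : ℝ) : x ^ 2 / 2 ≤ Real.cosh x := by
  have h : Real.cosh x = 1 + 2 * Real.sinh (x / 2) ^ 2 := by
    have := Real.cosh_two_mul (x / 2)
    rw [show 2 * (x / 2) = x by ring, Real.cosh_sq] at this
    linarith
  have h2 : (x / 2) ^ 2 ≤ Real.sinh (x / 2) ^ 2 := by
    rcases le_total 0 (x / 2) with hx | hx
    · exact pow_le_pow_left₀ hx (Real.self_le_sinh_iff.mpr hx) 2
    · have := Real.sinh_le_self_iff.mpr hx
      nlinarith
  rw [h]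
  nlinarith

/-- Integrability of the stationary Sommerfeld integrand `K β = 𝒵(β, φ) e^{iωρ cosh β}`. -/
lemma integrable_Zker_mul_exp {α φ : ℝ} (hα : α ∈ Set.Ioo (π/2) π)
    (hφ : φ ∈ Set.Icc (0:ℝ) (2*π)) (hφp : φ ≠ π + α) (hφm : φ ≠ π - α)
    {ω : ℂ} (hω : 0 < ω.im) {ρ : ℝ} (hρ : 0 < ρ) :
    Integrable fun β : ℝ =>
      Zker α β φ * Complex.exp (Complex.I * ω * (ρ : ℂ) * (Real.cosh β : ℂ)) := by
  obtain ⟨B, hB⟩ := Zker_bounded hα hφ hφp hφm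
  have hb : 0 < ω.im * ρ / 2 := by positivity
  refine ((integrable_exp_neg_mul_sq hb).const_mul B).mono' ?_ (ae_of_all _ fun β => ?_)
  · have := measurable_Zker α φ
    exact Measurable.aestronglyMeasurable (by fun_prop)
  · rw [norm_mul, Complex.norm_exp]
    refine mul_le_mul (hB β) (Real.exp_le_exp.mpr ?_) (Real.exp_pos _).le
      ((norm_nonneg _).trans (hB β))
    have e : (Complex.I * ω * (ρ : ℂ) * (Real.cosh β : ℂ)).re = -(ω.im * ρ * Real.cosh β) := by
      simp only [Complex.mul_re, Complex.mul_im, Complex.I_re, Complex.I_im, Complex.ofReal_re,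
        Complex.ofReal_im]
      ring
    rw [e]
    nlinarith [mul_le_mul_of_nonneg_left (sq_div_two_le_cosh β) (mul_pos hω hρ).le]

lemma integrableOn_rpow_mul_exp (p : ℝ) {b : ℝ} (hb : 0 < b) :
    IntegrableOn (fun s : ℝ => (1 + s) ^ (-p) * Real.exp (-b * s)) (Ioi 0) := by
  refine integrable_of_isBigO_exp_neg (half_pos hb) ?_ ?_
  · refine ContinuousOn.mul (ContinuousOn.rpow_const (by fun_prop) fun s hs => Or.inl ?_)
      (by fun_prop)
    have : (0 : ℝ) ≤ s := hs
    positivity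
  · have h1 : (fun s : ℝ => (1 + s) ^ (-p)) =O[atTop] fun s => Real.exp (b / 2 * (1 + s)) :=
      ((isLittleO_rpow_exp_pos_mul_atTop (-p) (half_pos hb)).comp_tendsto
        (tendsto_atTop_add_const_left atTop 1 tendsto_id)).isBigO
    have h2 := h1.mul (Asymptotics.isBigO_refl (fun s : ℝ => Real.exp (-b * s)) atTop)
    refine h2.trans ((Asymptotics.isBigO_const_mul_self (Real.exp (b / 2)) _ _).congr_left ?_)
    intro s
    rw [← Real.exp_add, ← Real.exp_add]
    ring_nf

/-- Integrability of `h s = e^{i(ω - ω₀)s} f(s)` over the whole line. -/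
lemma integrable_exp_mul (ω₀ : ℝ) {f : ℝ → ℂ} (hf_meas : Measurable f)
    (hf0 : ∀ s < (0:ℝ), f s = 0)
    (hf_bd : ∃ p M : ℝ, ∀ s : ℝ, (1 + |s|) ^ p * ‖f s‖ ≤ M) {ω : ℂ} (hω : 0 < ω.im) :
    Integrable fun s : ℝ => Complex.exp (Complex.I * (ω - (ω₀:ℂ)) * (s : ℂ)) * f s := by
  obtain ⟨p, M, hM⟩ := hf_bd
  have hon : IntegrableOn
      (fun s : ℝ => Complex.exp (Complex.I * (ω - (ω₀:ℂ)) * (s : ℂ)) * f s) (Ioi 0) := by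
    refine ((integrableOn_rpow_mul_exp p hω).const_mul M).mono'
      (Measurable.aestronglyMeasurable (by fun_prop)) ?_
    refine (ae_restrict_iff' measurableSet_Ioi).mpr (ae_of_all _ fun s hs => ?_)
    have hs0 : (0 : ℝ) < s := hs
    have h1 : (0 : ℝ) < 1 + s := by positivity
    have e : (Complex.I * (ω - (ω₀:ℂ)) * (s : ℂ)).re = -ω.im * s := by
      simp
    have hfs : ‖f s‖ ≤ M * (1 + s) ^ (-p) := by
      have := hM s
      rw [abs_of_pos hs0] at this
      rw [Real.rpow_neg h1.le, ← div_eq_mul_inv, le_div_iff₀ (Real.rpow_pos_of_pos h1 p)]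
      linarith
    rw [norm_mul, Complex.norm_exp, e]
    calc Real.exp (-ω.im * s) * ‖f s‖
        ≤ Real.exp (-ω.im * s) * (M * (1 + s) ^ (-p)) :=
          mul_le_mul_of_nonneg_left hfs (Real.exp_pos _).le
      _ = M * ((1 + s) ^ (-p) * Real.exp (-ω.im * s)) := by ring
  rw [← integrableOn_Ici_iff_integrableOn_Ioi] at hon
  refine (integrableOn_iff_integrable_of_support_subset fun s hs => ?_).mp hon
  by_contra hneg
  exact hs (by simp [hf0 s (not_le.mp hneg)])

/-- The Fourier–Laplace transform in `t` of the nonstationary diffracted wave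
`u_d(ρ,φ,t) = (i/8π) ∫_ℝ 𝒵(β,φ) F(t − ρ cosh β) dβ`, `F(s) = e^{−iω₀ s} f(s)`, equals
`(i/8π) f̂(ω−ω₀) ∫_ℝ 𝒵(β,φ) e^{iωρ cosh β} dβ`; the double integral converges absolutely. -/
theorem fourierLaplace_diffracted_wave (α : ℝ) (hα : α ∈ Set.Ioo (π/2) π)
    (ω₀ : ℝ) (hω₀ : 0 < ω₀) (f : ℝ → ℂ) (hf_meas : Measurable f)
    (hf0 : ∀ s < (0:ℝ), f s = 0)
    (hf_bd : ∃ p M : ℝ, ∀ s : ℝ, (1 + |s|) ^ p * ‖f s‖ ≤ M)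
    (F : ℝ → ℂ) (hF : ∀ s : ℝ, F s = Complex.exp (-Complex.I * (ω₀ : ℂ) * (s : ℂ)) * f s)
    (ω : ℂ) (hω : 0 < ω.im) (ρ : ℝ) (hρ : 0 < ρ)
    (φ : ℝ) (hφ : φ ∈ Set.Icc (0:ℝ) (2*π)) (hφp : φ ≠ π + α) (hφm : φ ≠ π - α) :
    Integrable (fun q : ℝ × ℝ =>
        ‖Complex.exp (Complex.I * ω * (q.1 : ℂ)) * Zker α q.2 φ * F (q.1 - ρ * Real.cosh q.2)‖)
      (((volume : Measure ℝ).restrict (Set.Ioi 0)).prod (volume : Measure ℝ)) ∧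
    (∫ t in Set.Ioi (0:ℝ),
        Complex.exp (Complex.I * ω * (t : ℂ)) *
          ((Complex.I / (8*(π:ℂ))) * ∫ β : ℝ, Zker α β φ * F (t - ρ * Real.cosh β))) =
      (Complex.I / (8*(π:ℂ))) *
        (∫ s in Set.Ioi (0:ℝ), Complex.exp (Complex.I * (ω - (ω₀:ℂ)) * (s : ℂ)) * f s) *
        ∫ β : ℝ, Zker α β φ * Complex.exp (Complex.I * ω * (ρ : ℂ) * (Real.cosh β : ℂ)) := by
  set h : ℝ → ℂ := fun s => Complex.exp (Complex.I * (ω - (ω₀:ℂ)) * (s : ℂ)) * f s with hh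
  set K : ℝ → ℂ := fun β =>
    Zker α β φ * Complex.exp (Complex.I * ω * (ρ : ℂ) * (Real.cosh β : ℂ)) with hK
  have hint : Integrable h := integrable_exp_mul ω₀ hf_meas hf0 hf_bd hω
  have Kint : Integrable K := integrable_Zker_mul_exp hα hφ hφp hφm hω hρ
  have hneg : ∀ s < (0:ℝ), h s = 0 := fun s hs => by simp [hh, hf0 s hs]
  have hmeas : Measurable h := by fun_prop
  have Kmeas : Measurable K := by
    have := measurable_Zker α φ
    fun_prop
  have hc : ∀ β, 0 < ρ * Real.cosh β := fun β => mul_pos hρ (Real.cosh_pos β)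
  have hfac : ∀ t β : ℝ,
      Complex.exp (Complex.I * ω * (t : ℂ)) * Zker α β φ * F (t - ρ * Real.cosh β)
        = K β * h (t - ρ * Real.cosh β) := by
    intro t β
    have e : Complex.exp (Complex.I * ω * (t : ℂ))
          * Complex.exp (-Complex.I * (ω₀ : ℂ) * ((t - ρ * Real.cosh β : ℝ) : ℂ))
        = Complex.exp (Complex.I * ω * (ρ : ℂ) * (Real.cosh β : ℂ))
          * Complex.exp (Complex.I * (ω - (ω₀:ℂ)) * ((t - ρ * Real.cosh β : ℝ) : ℂ)) := by
      rw [← Complex.exp_add, ← Complex.exp_add]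
      congr 1
      push_cast
      ring
    simp only [hF, hh, hK]
    linear_combination (Zker α β φ * f (t - ρ * Real.cosh β)) * e
  -- For `c > 0` the translate `h (· - c)` lives on `(0, ∞)`, so it has the same integral as `h`.
  have hshift : ∀ c > (0:ℝ), ∫ t in Ioi (0:ℝ), h (t - c) = ∫ s in Ioi (0:ℝ), h s := by
    intro c hcpos
    rw [setIntegral_eq_integral_of_forall_compl_eq_zero, integral_sub_right_eq_self h c,
      ← integral_Ici_eq_integral_Ioi, setIntegral_eq_integral_of_forall_compl_eq_zero]
    · exact fun s hs => hneg s (not_le.mp hs)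
    · exact fun t ht => hneg _ (by have : t ≤ 0 := not_lt.mp ht; linarith)
  have hG : Integrable (fun q : ℝ × ℝ => K q.2 * h (q.1 - ρ * Real.cosh q.2))
      (((volume : Measure ℝ).restrict (Set.Ioi 0)).prod (volume : Measure ℝ)) := by
    have hGm : Measurable fun q : ℝ × ℝ => K q.2 * h (q.1 - ρ * Real.cosh q.2) := by fun_prop
    refine (integrable_prod_iff' hGm.aestronglyMeasurable).mpr ⟨ae_of_all _ fun β => ?_, ?_⟩
    · exact ((hint.comp_sub_right (ρ * Real.cosh β)).restrict).const_mul (K β)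
    · refine (Kint.norm.mul_const (∫ s, ‖h s‖)).mono'
        hGm.norm.stronglyMeasurable.integral_prod_left'.aestronglyMeasurable
        (ae_of_all _ fun β => ?_)
      rw [Real.norm_of_nonneg (integral_nonneg fun _ => norm_nonneg _)]
      simp only [norm_mul]
      rw [integral_const_mul]
      refine mul_le_mul_of_nonneg_left ?_ (norm_nonneg _)
      calc ∫ t in Ioi (0:ℝ), ‖h (t - ρ * Real.cosh β)‖
          ≤ ∫ t, ‖h (t - ρ * Real.cosh β)‖ :=
            setIntegral_le_integral (hint.comp_sub_right _).norm
              (ae_of_all _ fun _ => norm_nonneg _)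
        _ = ∫ s, ‖h s‖ := integral_sub_right_eq_self (fun s => ‖h s‖) _
  refine ⟨?_, ?_⟩
  · simp only [hfac]
    exact hG.norm
  · calc (∫ t in Set.Ioi (0:ℝ), Complex.exp (Complex.I * ω * (t : ℂ)) *
          ((Complex.I / (8*(π:ℂ))) * ∫ β : ℝ, Zker α β φ * F (t - ρ * Real.cosh β)))
        = ∫ t in Set.Ioi (0:ℝ), (Complex.I / (8*(π:ℂ))) *
            ∫ β : ℝ, K β * h (t - ρ * Real.cosh β) := by
          congr 1
          funext t
          rw [mul_left_comm, ← integral_const_mul]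
          simp only [← hfac, mul_assoc]
      _ = (Complex.I / (8*(π:ℂ))) *
            ∫ β : ℝ, ∫ t in Set.Ioi (0:ℝ), K β * h (t - ρ * Real.cosh β) := by
          rw [integral_const_mul, integral_integral_swap hG]
      _ = (Complex.I / (8*(π:ℂ))) * (∫ s in Set.Ioi (0:ℝ), h s) * ∫ β : ℝ, K β := by
          simp only [integral_const_mul, hshift _ (hc _)]
          rw [integral_mul_const]
          ring
end

section
/- Let ω ∈ ℂ and ρ > 0. Then lim_{ε→0⁺} ∫_{−1}^{1} e^{iωρ cosh β} ( 1/(β + iε) − 1/(β − iε) ) dβ = −2πi e^{iωρ}. (This computes the jump across ε = 0 of the Cauchy-type integral ∫_{−1}^{1} e^{iωρ cosh β}/(β + iε) dβ.) -/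
open Real MeasureTheory Set Filter

/-!
The difference of the two Cauchy kernels is `-2i · ε / (β² + ε²)`, a multiple of the Poisson kernel
(`cauchy_kernel_sub`). The integral of `ε / (β² + ε²)` over `[-1, 1]` is `2 arctan (1/ε)`
(`integral_poisson`), which tends to `π`. Split the weight `g` as `g 0 + (g - g 0)`: the constant part yields
`-2πi g 0`. For the remainder, `g` is Lipschitz on `[-1, 1]`, say with constant `C`, so that
`‖g β - g 0‖ · ε / (β² + ε²) ≤ C |β| ε / (β² + ε²) ≤ C`, and dominated convergence shows that
it contributes nothing in the limit. The argument applies to every `C¹` weight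
(`tendsto_integral_jump`).
-/

lemma cauchy_kernel_sub {ε : ℝ} (hε : 0 < ε) (β : ℝ) :
    1 / ((β : ℂ) + Complex.I * (ε : ℂ)) - 1 / ((β : ℂ) - Complex.I * (ε : ℂ)) =
      -2 * Complex.I * ((ε / (β ^ 2 + ε ^ 2) : ℝ) : ℂ) := by
  have h1 : (β : ℂ) + Complex.I * (ε : ℂ) ≠ 0 := fun h => by
    simpa [hε.ne'] using congrArg Complex.im h
  have h2 : (β : ℂ) - Complex.I * (ε : ℂ) ≠ 0 := fun h => by
    simpa [hε.ne'] using congrArg Complex.im h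
  have h3 : ((β : ℂ) ^ 2 + (ε : ℂ) ^ 2) =
      ((β : ℂ) + Complex.I * (ε : ℂ)) * ((β : ℂ) - Complex.I * (ε : ℂ)) := by
    linear_combination (ε : ℂ) ^ 2 * Complex.I_sq
  push_cast
  rw [h3]
  field_simp
  ring

lemma continuous_poisson {ε : ℝ} (hε : 0 < ε) :
    Continuous fun β : ℝ => ε / (β ^ 2 + ε ^ 2) :=
  continuous_const.div (by fun_prop) fun β => by positivity

lemma integral_poisson {ε : ℝ} (hε : 0 < ε) :
    ∫ β in (-1 : ℝ)..1, ε / (β ^ 2 + ε ^ 2) = 2 * arctan ε⁻¹ := by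
  have hd : ∀ β ∈ uIcc (-1 : ℝ) 1,
      HasDerivAt (fun β : ℝ => arctan (β * ε⁻¹)) (ε / (β ^ 2 + ε ^ 2)) β := fun β _ => by
    convert ((hasDerivAt_id' β).mul_const ε⁻¹).arctan using 1
    field_simp
    ring
  rw [intervalIntegral.integral_eq_sub_of_hasDerivAt hd
    ((continuous_poisson hε).intervalIntegrable _ _)]
  rw [one_mul, neg_one_mul, arctan_neg]
  ring

/-- The jump relation of the Cauchy integral at `0`, for an arbitrary `C¹` weight. -/
lemma tendsto_integral_jump {g : ℝ → ℂ} (hg : ContDiff ℝ 1 g) :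
    Tendsto (fun ε : ℝ => ∫ β in (-1 : ℝ)..1,
        g β * (1 / ((β : ℂ) + Complex.I * (ε : ℂ)) - 1 / ((β : ℂ) - Complex.I * (ε : ℂ))))
      (nhdsWithin 0 (Ioi 0)) (nhds (-2 * (π : ℂ) * Complex.I * g 0)) := by
  have hgc : Continuous g := hg.continuous
  obtain ⟨C, hC⟩ := (isCompact_Icc (a := (-1 : ℝ)) (b := 1)).exists_bound_of_continuousOn
    (hg.continuous_deriv le_rfl).continuousOn
  have hLip : ∀ β ∈ Icc (-1 : ℝ) 1, ‖g β - g 0‖ ≤ C * |β| := fun β hβ => by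
    simpa using (convex_Icc (-1 : ℝ) 1).norm_image_sub_le_of_norm_deriv_le
      (fun x _ => (hg.differentiable one_ne_zero).differentiableAt) hC
      (by simp : (0 : ℝ) ∈ Icc (-1 : ℝ) 1) hβ
  have hC0 : 0 ≤ C := (norm_nonneg _).trans (hC 0 (by simp))
  have hrem : Tendsto (fun ε : ℝ => ∫ β in (-1 : ℝ)..1,
      (g β - g 0) * ((ε / (β ^ 2 + ε ^ 2) : ℝ) : ℂ)) (nhdsWithin 0 (Ioi 0)) (nhds 0) := by
    have h := intervalIntegral.tendsto_integral_filter_of_dominated_convergence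
      (μ := volume) (a := -1) (b := 1) (l := nhdsWithin (0 : ℝ) (Ioi 0))
      (F := fun ε β => (g β - g 0) * ((ε / (β ^ 2 + ε ^ 2) : ℝ) : ℂ)) (f := fun _ => 0)
      (fun _ => C) ?_ ?_ intervalIntegrable_const ?_
    · simpa using h
    · filter_upwards [self_mem_nhdsWithin] with ε hε
      exact ((hgc.sub continuous_const).mul
        (Complex.continuous_ofReal.comp (continuous_poisson hε))).aestronglyMeasurable
    · filter_upwards [self_mem_nhdsWithin] with ε hε
      have hε : 0 < ε := hε
      refine Eventually.of_forall fun β hβ => ?_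
      rw [uIoc_of_le (by norm_num)] at hβ
      have hpos : 0 < β ^ 2 + ε ^ 2 := by positivity
      have hk : |β| * (ε / (β ^ 2 + ε ^ 2)) ≤ 1 := by
        rw [← mul_div_assoc, div_le_one hpos, ← sq_abs β]
        nlinarith [sq_nonneg (|β| - ε), sq_nonneg |β|, sq_nonneg ε]
      rw [norm_mul, Complex.norm_real, Real.norm_of_nonneg (by positivity)]
      calc ‖g β - g 0‖ * (ε / (β ^ 2 + ε ^ 2)) ≤ C * |β| * (ε / (β ^ 2 + ε ^ 2)) := by
            gcongr
            exact hLip β (Ioc_subset_Icc_self hβ)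
        _ = C * (|β| * (ε / (β ^ 2 + ε ^ 2))) := by ring
        _ ≤ C := mul_le_of_le_one_right hC0 hk
    · refine Eventually.of_forall fun β _ => ?_
      rcases eq_or_ne β 0 with rfl | hβ
      · simp
      · have hc : ContinuousAt (fun ε : ℝ => ε / (β ^ 2 + ε ^ 2)) 0 :=
          continuousAt_id.div (by fun_prop) (by simpa using hβ)
        have ht : Tendsto (fun ε : ℝ => ε / (β ^ 2 + ε ^ 2)) (nhdsWithin 0 (Ioi 0)) (nhds 0) := by
          simpa using hc.tendsto.mono_left nhdsWithin_le_nhds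
        simpa using ((Complex.continuous_ofReal.tendsto 0).comp ht).const_mul (g β - g 0)
  have harc : Tendsto (fun ε : ℝ => ((2 * arctan ε⁻¹ : ℝ) : ℂ)) (nhdsWithin 0 (Ioi 0))
      (nhds (π : ℂ)) := by
    have h := ((tendsto_arctan_atTop.mono_right nhdsWithin_le_nhds).comp
      tendsto_inv_nhdsGT_zero).const_mul (2 : ℝ)
    rw [mul_div_cancel₀ π two_ne_zero] at h
    exact (Complex.continuous_ofReal.tendsto π).comp h
  have hsum := (hrem.add (harc.const_mul (g 0))).const_mul (-2 * Complex.I)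
  rw [show -2 * (π : ℂ) * Complex.I * g 0 = -2 * Complex.I * (0 + g 0 * π) by ring]
  refine hsum.congr' ?_
  filter_upwards [self_mem_nhdsWithin] with ε hε
  have hε : 0 < ε := hε
  have hk : Continuous fun β : ℝ => ((ε / (β ^ 2 + ε ^ 2) : ℝ) : ℂ) :=
    Complex.continuous_ofReal.comp (continuous_poisson hε)
  have h1 : Continuous fun β : ℝ => (g β - g 0) * ((ε / (β ^ 2 + ε ^ 2) : ℝ) : ℂ) :=
    (hgc.sub continuous_const).mul hk
  have h2 : Continuous fun β : ℝ => g 0 * ((ε / (β ^ 2 + ε ^ 2) : ℝ) : ℂ) :=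
    continuous_const.mul hk
  rw [← integral_poisson hε, ← intervalIntegral.integral_ofReal,
    ← intervalIntegral.integral_const_mul, ← intervalIntegral.integral_add
      (h1.intervalIntegrable _ _)
      (h2.intervalIntegrable _ _),
    ← intervalIntegral.integral_const_mul]
  refine intervalIntegral.integral_congr fun β _ => ?_
  simp only [cauchy_kernel_sub hε]
  ring

/-- The jump of the Cauchy-type integral across `ε = 0`:
`lim_{ε→0⁺} ∫_{−1}^{1} e^{iωρ cosh β} (1/(β+iε) − 1/(β−iε)) dβ = −2πi e^{iωρ}`. -/
theorem cauchy_jump_simple_pole (ω : ℂ) (ρ : ℝ) (hρ : 0 < ρ) :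
    Tendsto (fun ε : ℝ => ∫ β in (-1:ℝ)..1,
        Complex.exp (Complex.I * ω * (ρ : ℂ) * (Real.cosh β : ℂ)) *
          (1 / ((β : ℂ) + Complex.I * (ε : ℂ)) - 1 / ((β : ℂ) - Complex.I * (ε : ℂ))))
      (nhdsWithin 0 (Set.Ioi 0))
      (nhds (-2 * (π : ℂ) * Complex.I * Complex.exp (Complex.I * ω * (ρ : ℂ)))) := by
  have hcosh : ContDiff ℝ 1 fun β : ℝ => (Real.cosh β : ℂ) :=
    Complex.ofRealCLM.contDiff.comp Real.contDiff_cosh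
  have hg : ContDiff ℝ 1 fun β : ℝ =>
      Complex.exp (Complex.I * ω * (ρ : ℂ) * (Real.cosh β : ℂ)) :=
    (contDiff_const.mul hcosh).cexp
  simpa only [Real.cosh_zero, Complex.ofReal_one, mul_one] using tendsto_integral_jump hg
end
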